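/- arXiv:1103.5575 — 2 statements merged into one kernel-verified Lean document; each statement's English description precedes it below -/
import Mathlib

section
/- Let p > 0 with p ≠ 1, b ∈ ℝ, c ≥ 0, let F be a Lévy measure on ℝ with F((−∞,−1]) = 0 and ∫_{(1,∞)} (1+x)^{1−p} dF(x) < ∞, and let h be a truncation function. Then for every π in the interior of the set A = {π ∈ ℝ : F({x : 1 + πx ≤ 0}) = 0}, the function x ↦ ((1+πx)^{1−p} − 1)/(1−p) − π h(x) is F-integrable, and the function g(π) := πb − pπ²c/2 + ∫_{(−1,∞)} (((1+πx)^{1−p} − 1)/(1−p) − π h(x)) dF(x) is finite, continuous and concave on the interior of A. -/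
open MeasureTheory Set Filter
open scoped ENNReal Topology

/-- The derivative of the power utility function on the positive half-line. -/
theorem hasDerivAt_powerUtility {p : ℝ} (hp1 : p ≠ 1) {y : ℝ} (hy : 0 < y) :
    HasDerivAt (fun y : ℝ => (y ^ (1 - p) - 1) / (1 - p)) (y ^ (-p)) y := by
  have hq : 1 - p ≠ 0 := sub_ne_zero.mpr hp1.symm
  refine (((Real.hasDerivAt_rpow_const (p := 1 - p) (Or.inl hy.ne')).sub_const 1).div_const
    (1 - p)).congr_deriv ?_
  rw [mul_div_cancel_left₀ _ hq]
  ring_nf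

theorem concaveOn_powerUtility {p : ℝ} (hp : 0 < p) (hp1 : p ≠ 1) :
    ConcaveOn ℝ (Ioi 0) (fun y : ℝ => (y ^ (1 - p) - 1) / (1 - p)) := by
  have hd : ∀ y ∈ Ioi (0 : ℝ),
      HasDerivAt (fun y : ℝ => (y ^ (1 - p) - 1) / (1 - p)) (y ^ (-p)) y :=
    fun y hy => hasDerivAt_powerUtility hp1 hy
  refine AntitoneOn.concaveOn_of_deriv (convex_Ioi 0)
    (fun y hy => (hd y hy).continuousAt.continuousWithinAt) ?_ ?_
  · rw [interior_Ioi]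
    exact fun y hy => (hd y hy).differentiableAt.differentiableWithinAt
  · rw [interior_Ioi]
    intro x hx y hy hxy
    rw [(hd x hx).deriv, (hd y hy).deriv]
    exact Real.rpow_le_rpow_of_nonpos hx hxy (by linarith)

/-- Second-order expansion of the power utility function at `1`. -/
theorem exists_abs_powerUtility_sub_le {p : ℝ} (hp1 : p ≠ 1) :
    ∃ η > 0, ∃ C ≥ 0, ∀ t : ℝ, |t| ≤ η →
      |((1 + t) ^ (1 - p) - 1) / (1 - p) - t| ≤ C * t ^ 2 := by
  have hO := (Real.hasDerivAt_rpow_const (x := (1 : ℝ)) (p := -p) (Or.inl one_ne_zero)).isBigO_sub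
  obtain ⟨C, hC, hO⟩ := hO.exists_nonneg
  obtain ⟨r, hr, hball⟩ := Metric.eventually_nhds_iff.mp hO.bound
  refine ⟨min (r / 2) (1 / 2), by positivity, C, hC, fun t ht => ?_⟩
  have ht1 : |t| ≤ r / 2 := ht.trans (min_le_left _ _)
  have ht2 : |t| ≤ 1 / 2 := ht.trans (min_le_right _ _)
  have hseg : ∀ s ∈ uIcc 0 t, |s| ≤ |t| := by
    intro s hs
    simpa using abs_sub_left_of_mem_uIcc hs
  have hmv := (convex_uIcc (0 : ℝ) t).norm_image_sub_le_of_norm_hasDerivWithin_le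
    (f := fun s : ℝ => ((1 + s) ^ (1 - p) - 1) / (1 - p) - s)
    (f' := fun s => (1 + s) ^ (-p) - 1) (C := C * |t|) (x := 0) (y := t)
    (fun s hs => ?_) (fun s hs => ?_) left_mem_uIcc right_mem_uIcc
  · simp only [add_zero, Real.one_rpow, sub_self, zero_div, sub_zero, Real.norm_eq_abs] at hmv
    rwa [mul_assoc, ← sq, sq_abs] at hmv
  · have hs0 : 0 < 1 + s := by
      have := neg_abs_le s
      have := hseg s hs
      linarith
    have hd := (hasDerivAt_powerUtility hp1 hs0).comp_const_add 1 s
    exact (hd.sub (hasDerivAt_id s)).hasDerivWithinAt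
  · have hs1 := hseg s hs
    have := @hball (1 + s) (by
      rw [Real.dist_eq, add_sub_cancel_left]
      linarith)
    simp only [Real.one_rpow, add_sub_cancel_left, Real.norm_eq_abs] at this
    exact this.trans (by gcongr)

theorem convex_setOf_measure_one_add_mul_nonpos (F : Measure ℝ) :
    Convex ℝ {π : ℝ | F {x | 1 + π * x ≤ 0} = 0} := by
  intro π₁ h₁ π₂ h₂ s t hs ht hst
  refine measure_mono_null ?_ (measure_union_null h₁ h₂)
  intro x hx
  simp only [mem_ofPred_eq, smul_eq_mul, mem_union] at hx ⊢
  by_contra! hcon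
  have hconv := (convex_Ioi (0 : ℝ)) hcon.1 hcon.2 hs ht hst
  simp only [smul_eq_mul, mem_Ioi] at hconv
  have : s * (1 + π₁ * x) + t * (1 + π₂ * x) = 1 + (s * π₁ + t * π₂) * x := by
    linear_combination hst
  linarith

theorem ae_one_add_mul_pos {F : Measure ℝ} {π : ℝ} (hπ : F {x | 1 + π * x ≤ 0} = 0) :
    ∀ᵐ x ∂F, 0 < 1 + π * x :=
  (measure_eq_zero_iff_ae_notMem.mp hπ).mono fun _ hx => not_le.mp hx

/-- For an interior exposure `π`, the payoff `1 + π * x` dominates a multiple of `|x|`. -/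
theorem exists_mul_abs_lt_one_add_mul {F : Measure ℝ} {π : ℝ}
    (hπ : π ∈ interior {π : ℝ | F {x | 1 + π * x ≤ 0} = 0}) :
    ∃ ε > 0, ∀ᵐ x ∂F, ε * |x| < 1 + π * x := by
  obtain ⟨r, hr, hball⟩ := Metric.nhds_basis_closedBall.mem_iff.mp (mem_interior_iff_mem_nhds.mp hπ)
  have hplus : F {x | 1 + (π + r) * x ≤ 0} = 0 := hball (by simp [abs_of_pos hr])
  have hminus : F {x | 1 + (π - r) * x ≤ 0} = 0 := hball (by simp [abs_of_pos hr])
  refine ⟨r, hr, ?_⟩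
  filter_upwards [ae_one_add_mul_pos hplus, ae_one_add_mul_pos hminus] with x h₁ h₂
  rcases abs_cases x with ⟨hx, -⟩ | ⟨hx, -⟩ <;> rw [hx] <;> linarith

/-- A real power is bounded, up to a constant, on a cone around a positive reference value. -/
theorem rpow_le_add_mul_rpow {k K y z : ℝ} (q : ℝ) (hk : 0 < k) (hK : 0 < K) (hz : 0 < z)
    (hky : k * z ≤ y) (hyK : y ≤ K * z) : y ^ q ≤ (k ^ q + K ^ q) * z ^ q := by
  have hkz : 0 < k * z := by positivity
  have hkq : 0 ≤ k ^ q * z ^ q := by positivity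
  have hKq : 0 ≤ K ^ q * z ^ q := by positivity
  rw [add_mul]
  rcases le_total 0 q with hq | hq
  · have := Real.rpow_le_rpow (hkz.le.trans hky) hyK hq
    rw [Real.mul_rpow hK.le hz.le] at this
    linarith
  · have := Real.rpow_le_rpow_of_nonpos hkz hky hq
    rw [Real.mul_rpow hk.le hz.le] at this
    linarith

section LevyMeasure

variable {F : Measure ℝ}

theorem integrable_min_sq_one_of_lintegral_ne_top
    (hFlevy : ∫⁻ x, ENNReal.ofReal (min (x ^ 2) 1) ∂F ≠ ∞) :
    Integrable (fun x : ℝ => min (x ^ 2) 1) F :=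
  (lintegral_ofReal_ne_top_iff_integrable (by fun_prop)
    (Eventually.of_forall fun x => by positivity)).mp hFlevy

theorem measure_setOf_lt_abs_lt_top
    (hFlevy : ∫⁻ x, ENNReal.ofReal (min (x ^ 2) 1) ∂F ≠ ∞) {δ : ℝ} (hδ : 0 < δ) :
    F {x | δ < |x|} < ∞ := by
  refine (measure_mono ?_).trans_lt
    ((integrable_min_sq_one_of_lintegral_ne_top hFlevy).measure_ge_lt_top
      (ε := min (δ ^ 2) 1) (by positivity))
  intro x hx
  have : δ ^ 2 ≤ x ^ 2 := by
    rw [← sq_abs x]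
    exact pow_le_pow_left₀ hδ.le (le_of_lt hx) 2
  exact min_le_min_right 1 this

theorem integrableOn_one_add_abs_rpow {q : ℝ}
    (hFlevy : ∫⁻ x, ENNReal.ofReal (min (x ^ 2) 1) ∂F ≠ ∞)
    (hFint : IntegrableOn (fun x => (1 + x) ^ q) (Ioi (1 : ℝ)) F) {δ : ℝ} (hδ : 0 < δ) :
    IntegrableOn (fun x => (1 + |x|) ^ q) ({x | δ < |x|} ∩ Ioi (-1)) F := by
  have hmeas : MeasurableSet {x : ℝ | δ < |x|} := measurableSet_lt (by fun_prop) (by fun_prop)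
  have hsub : {x : ℝ | δ < |x|} ∩ Ioi (-1) ⊆ ({x | δ < |x|} ∩ Icc (-1) 1) ∪ Ioi 1 := by
    rintro x ⟨hx, hx1⟩
    rcases le_or_gt x 1 with h | h
    · exact Or.inl ⟨hx, (mem_Ioi.mp hx1).le, h⟩
    · exact Or.inr h
  refine IntegrableOn.mono_set (IntegrableOn.union ?_ ?_) hsub
  · refine Measure.integrableOn_of_bounded (M := 1 ^ q + 2 ^ q)
      (measure_mono inter_subset_left |>.trans_lt (measure_setOf_lt_abs_lt_top hFlevy hδ)).ne
      (Measurable.aestronglyMeasurable (by fun_prop)) ?_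
    refine (ae_restrict_mem (hmeas.inter measurableSet_Icc)).mono fun x hx => ?_
    have habs : |x| ≤ 1 := abs_le.mpr hx.2
    have h0 := abs_nonneg x
    rw [Real.norm_of_nonneg (by positivity)]
    simpa using rpow_le_add_mul_rpow q one_pos two_pos one_pos
      (y := 1 + |x|) (by linarith) (by linarith)
  · refine hFint.congr_fun (fun x hx => ?_) measurableSet_Ioi
    simp only [abs_of_pos (one_pos.trans (mem_Ioi.mp hx))]

theorem integrableOn_powerUtility_sub_mul {p : ℝ} (hp1 : p ≠ 1)
    (hFlevy : ∫⁻ x, ENNReal.ofReal (min (x ^ 2) 1) ∂F ≠ ∞)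
    (hFint : IntegrableOn (fun x => (1 + x) ^ (1 - p)) (Ioi (1 : ℝ)) F)
    {h : ℝ → ℝ} (hhm : Measurable h) (hhbdd : ∃ M, ∀ x, |h x| ≤ M)
    (hh0 : ∀ᶠ x in 𝓝 (0 : ℝ), h x = x) {π : ℝ}
    (hπ : π ∈ interior {π : ℝ | F {x | 1 + π * x ≤ 0} = 0}) :
    IntegrableOn (fun x => ((1 + π * x) ^ (1 - p) - 1) / (1 - p) - π * h x) (Ioi (-1 : ℝ)) F := by
  obtain ⟨η, hη, C, hC, hexp⟩ := exists_abs_powerUtility_sub_le hp1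
  obtain ⟨ε, hε, hlow⟩ := exists_mul_abs_lt_one_add_mul hπ
  obtain ⟨M, hM⟩ := hhbdd
  obtain ⟨r, hr, hball⟩ := Metric.eventually_nhds_iff.mp hh0
  obtain ⟨δ, hδ, hδ1, hδr, hδη⟩ : ∃ δ > 0, δ ≤ 1 ∧ δ < r ∧ |π| * δ ≤ η := by
    refine ⟨min 1 (min (r / 2) (η / (1 + |π|))), by positivity, min_le_left _ _, ?_, ?_⟩
    · refine ((min_le_right _ _).trans (min_le_left _ _)).trans_lt (half_lt_self hr)
    · calc |π| * min 1 (min (r / 2) (η / (1 + |π|))) ≤ (1 + |π|) * (η / (1 + |π|)) := by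
            gcongr
            · linarith
            · exact (min_le_right _ _).trans (min_le_right _ _)
        _ = η := by field_simp
  have hfm : Measurable fun x => ((1 + π * x) ^ (1 - p) - 1) / (1 - p) - π * h x := by fun_prop
  have hmeas : MeasurableSet {x : ℝ | δ < |x|} := measurableSet_lt (by fun_prop) (by fun_prop)
  have hmeas' : MeasurableSet {x : ℝ | |x| ≤ δ} := measurableSet_le (by fun_prop) (by fun_prop)
  have hsub : Ioi (-1 : ℝ) ⊆ {x | |x| ≤ δ} ∪ ({x | δ < |x|} ∩ Ioi (-1)) := fun x hx =>
    (le_or_gt |x| δ).imp id fun h => ⟨h, hx⟩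
  refine IntegrableOn.mono_set (IntegrableOn.union ?_ ?_) hsub
  · refine Integrable.mono'
      (((integrable_min_sq_one_of_lintegral_ne_top hFlevy).const_mul (C * π ^ 2)).integrableOn)
      hfm.aestronglyMeasurable ?_
    refine (ae_restrict_mem hmeas').mono fun x (hx : |x| ≤ δ) => ?_
    have hhx : h x = x := hball (by simpa using hx.trans_lt hδr)
    have hx2 : x ^ 2 ≤ 1 := by
      rw [← sq_abs]
      exact pow_le_one₀ (abs_nonneg x) (hx.trans hδ1)
    rw [hhx, min_eq_left hx2, Real.norm_eq_abs, mul_assoc, ← mul_pow]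
    refine hexp _ ?_
    rw [abs_mul]
    exact (by gcongr : |π| * |x| ≤ |π| * δ).trans hδη
  · set T : Set ℝ := {x | δ < |x|} ∩ Ioi (-1)
    have hTfin : F T ≠ ∞ :=
      (measure_mono inter_subset_left |>.trans_lt (measure_setOf_lt_abs_lt_top hFlevy hδ)).ne
    have hconst : ∀ a : ℝ, IntegrableOn (fun _ => a) T F := fun a => integrableOn_const hTfin
    have hh : IntegrableOn h T F :=
      Measure.integrableOn_of_bounded hTfin hhm.aestronglyMeasurable (M := M)
        (Eventually.of_forall hM)
    have hpow : IntegrableOn (fun x => (1 + π * x) ^ (1 - p)) T F := by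
      set k : ℝ := ε * δ / (1 + δ)
      have hk : 0 < k := by positivity
      refine Integrable.mono' ((integrableOn_one_add_abs_rpow hFlevy hFint hδ).const_mul
        (k ^ (1 - p) + (1 + |π|) ^ (1 - p)))
        (Measurable.aestronglyMeasurable (by fun_prop)) ?_
      filter_upwards [ae_restrict_mem (hmeas.inter measurableSet_Ioi), ae_restrict_of_ae hlow]
        with x hx hxlow
      have hx0 := abs_nonneg x
      have hpos : 0 < 1 + π * x := lt_of_le_of_lt (by positivity) hxlow
      rw [Real.norm_of_nonneg (by positivity)]
      refine rpow_le_add_mul_rpow _ hk (by positivity) (by positivity) ?_ ?_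
      · refine le_trans ?_ hxlow.le
        have hxδ : δ ≤ |x| := le_of_lt hx.1
        rw [div_mul_eq_mul_div, div_le_iff₀ (by positivity), mul_assoc, mul_assoc]
        exact mul_le_mul_of_nonneg_left (by linarith) hε.le
      · have h1 : π * x ≤ |π| * |x| := (le_abs_self _).trans (abs_mul π x).le
        have h2 := abs_nonneg π
        linarith
    exact ((hpow.sub (hconst 1)).div_const (1 - p)).sub (hh.const_mul π)

end LevyMeasure

theorem stmt0 (p b c : ℝ) (hp : 0 < p) (hp1 : p ≠ 1) (hc : 0 ≤ c)
    (F : Measure ℝ)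
    (hF0 : F {0} = 0)
    (hFlevy : ∫⁻ x, ENNReal.ofReal (min (x ^ 2) 1) ∂F ≠ ∞)
    (hFneg : F (Iic (-1 : ℝ)) = 0)
    (hFint : IntegrableOn (fun x => (1 + x) ^ (1 - p)) (Ioi (1 : ℝ)) F)
    (h : ℝ → ℝ) (hhC1 : ContDiff ℝ 1 h)
    (hhbdd : ∃ M, ∀ x, |h x| ≤ M)
    (hh0 : ∀ᶠ x in 𝓝 (0 : ℝ), h x = x)
    (hhcpt : ∃ R > 0, ∀ x, R < |x| → h x = 0) :
    (∀ π ∈ interior {π : ℝ | F {x | 1 + π * x ≤ 0} = 0},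
      IntegrableOn (fun x => ((1 + π * x) ^ (1 - p) - 1) / (1 - p) - π * h x) (Ioi (-1 : ℝ)) F) ∧
    ContinuousOn
      (fun π => π * b - p * π ^ 2 * c / 2 +
        ∫ x in Ioi (-1 : ℝ), (((1 + π * x) ^ (1 - p) - 1) / (1 - p) - π * h x) ∂F)
      (interior {π : ℝ | F {x | 1 + π * x ≤ 0} = 0}) ∧
    ConcaveOn ℝ (interior {π : ℝ | F {x | 1 + π * x ≤ 0} = 0})
      (fun π => π * b - p * π ^ 2 * c / 2 +
        ∫ x in Ioi (-1 : ℝ), (((1 + π * x) ^ (1 - p) - 1) / (1 - p) - π * h x) ∂F) := by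
  have hint : ∀ π ∈ interior {π : ℝ | F {x | 1 + π * x ≤ 0} = 0},
      IntegrableOn (fun x => ((1 + π * x) ^ (1 - p) - 1) / (1 - p) - π * h x) (Ioi (-1 : ℝ)) F :=
    fun π hπ => integrableOn_powerUtility_sub_mul hp1 hFlevy hFint
      hhC1.continuous.measurable hhbdd hh0 hπ
  have hconv := (convex_setOf_measure_one_add_mul_nonpos F).interior
  suffices hconc : ConcaveOn ℝ (interior {π : ℝ | F {x | 1 + π * x ≤ 0} = 0})
      (fun π => π * b - p * π ^ 2 * c / 2 +
        ∫ x in Ioi (-1 : ℝ), (((1 + π * x) ^ (1 - p) - 1) / (1 - p) - π * h x) ∂F) from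
    ⟨hint, hconc.continuousOn isOpen_interior, hconc⟩
  refine ConcaveOn.add ⟨hconv, ?_⟩ ⟨hconv, ?_⟩
  · intro π₁ _ π₂ _ s t hs ht hst
    simp only [smul_eq_mul]
    obtain rfl : t = 1 - s := by linarith
    have : 0 ≤ p * c / 2 * (s * (1 - s) * (π₁ - π₂) ^ 2) := by positivity
    linarith
  · intro π₁ h₁ π₂ h₂ s t hs ht hst
    simp only [smul_eq_mul]
    have hint₁ := hint π₁ h₁
    have hint₂ := hint π₂ h₂
    rw [← integral_const_mul, ← integral_const_mul,
      ← integral_add (hint₁.const_mul s) (hint₂.const_mul t)]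
    refine integral_mono_ae ((hint₁.const_mul s).add (hint₂.const_mul t))
      (hint _ (hconv h₁ h₂ hs ht hst)) ?_
    refine ae_restrict_of_ae ?_
    have hA₁ := interior_subset h₁
    have hA₂ := interior_subset h₂
    filter_upwards [ae_one_add_mul_pos hA₁, ae_one_add_mul_pos hA₂] with x hx₁ hx₂
    have hu := (concaveOn_powerUtility hp hp1).2 hx₁ hx₂ hs ht hst
    simp only [smul_eq_mul] at hu
    have harg : s * (1 + π₁ * x) + t * (1 + π₂ * x) = 1 + (s * π₁ + t * π₂) * x := by
      linear_combination hst
    rw [harg] at hu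
    linarith
end

section
/- Let c : [0,1] → ℝ be concave, let N ≥ 2, set t_i = i/N for i = 0, …, N, and let η := max_{0 ≤ i ≤ N−1} |c(t_{i+1}) − c(t_i)|. For x ∈ [0,1) let [x]_N := t_i where i is the unique index with t_i ≤ x < t_{i+1}. Then for every x ∈ [0,1), |c(x) − c([x]_N)| ≤ 2η. -/
open Set Filter
open scoped Topology

/-- Extrapolating a concave function past `q`, away from `u` and by at most the distance from `u`
to `q`, increases it by at most its variation between `u` and `q`. -/
lemma ConcaveOn.sub_le_abs_sub_of_extrapolate {S : Set ℝ} {c : ℝ → ℝ} (hc : ConcaveOn ℝ S c)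
    {u q s : ℝ} (hu : u ∈ S) (hv : q + s * (q - u) ∈ S) (hs0 : 0 ≤ s) (hs1 : s ≤ 1) :
    c (q + s * (q - u)) - c q ≤ |c u - c q| := by
  have hpos : 0 < 1 + s := by linarith
  have h := hc.2 hv hu (show 0 ≤ 1 / (1 + s) by positivity) (show 0 ≤ s / (1 + s) by positivity)
    (by field_simp)
  have hq : (1 / (1 + s)) • (q + s * (q - u)) + (s / (1 + s)) • u = q := by
    simp only [smul_eq_mul]
    field_simp
    ring
  rw [hq] at h
  simp only [smul_eq_mul] at h
  have h' : c (q + s * (q - u)) + s * c u ≤ (1 + s) * c q := by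
    calc c (q + s * (q - u)) + s * c u
        = (1 + s) * (1 / (1 + s) * c (q + s * (q - u)) + s / (1 + s) * c u) := by field_simp
      _ ≤ (1 + s) * c q := by gcongr
  nlinarith [neg_abs_le (c u - c q), abs_nonneg (c u - c q)]

theorem stmt9 (c : ℝ → ℝ) (hc : ConcaveOn ℝ (Icc 0 1) c)
    (N : ℕ) (hN : 2 ≤ N) :
    ∀ x ∈ Ico (0:ℝ) 1,
      |c x - c ((⌊(N : ℝ) * x⌋ : ℝ) / N)| ≤
        2 * (Finset.range N).sup' (Finset.nonempty_range_iff.mpr (by omega))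
          (fun i => |c (((i : ℝ) + 1) / N) - c ((i : ℝ) / N)|) := by
  rintro x ⟨hx0, hx1⟩
  have hη : ∀ i < N, |c (((i : ℝ) + 1) / N) - c ((i : ℝ) / N)| ≤
      (Finset.range N).sup' (Finset.nonempty_range_iff.mpr (by omega))
        (fun i => |c (((i : ℝ) + 1) / N) - c ((i : ℝ) / N)|) := fun i hi =>
    Finset.le_sup' (fun i : ℕ => |c (((i : ℝ) + 1) / N) - c ((i : ℝ) / N)|)
      (Finset.mem_range.mpr hi)
  generalize (Finset.range N).sup' (Finset.nonempty_range_iff.mpr (by omega))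
    (fun i => |c (((i : ℝ) + 1) / N) - c ((i : ℝ) / N)|) = η at hη ⊢
  have hNpos : (0 : ℝ) < N := by exact_mod_cast (by omega : 0 < N)
  have grid_mem : ∀ i : ℕ, i ≤ N → (i : ℝ) / N ∈ Icc (0 : ℝ) 1 := fun i hi =>
    ⟨by positivity, (div_le_one hNpos).mpr (by exact_mod_cast hi)⟩
  obtain ⟨i, hi⟩ := Int.eq_ofNat_of_zero_le (Int.floor_nonneg.mpr (mul_nonneg hNpos.le hx0))
  have hix : (i : ℝ) ≤ N * x := by simpa [hi] using Int.floor_le ((N : ℝ) * x)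
  have hxi : N * x < (i : ℝ) + 1 := by simpa [hi] using Int.lt_floor_add_one ((N : ℝ) * x)
  have hiN : i < N := by
    have : (i : ℝ) < N := by nlinarith
    exact_mod_cast this
  rw [hi, Int.cast_natCast]
  have hb : ((i : ℝ) + 1) / N ∈ Icc (0 : ℝ) 1 := by
    simpa using grid_mem (i + 1) hiN
  have hstep := hη i hiN
  have hη0 : 0 ≤ η := (abs_nonneg _).trans hstep
  have hxS : x ∈ Icc (0 : ℝ) 1 := ⟨hx0, hx1.le⟩
  have hlower : min (c ((i : ℝ) / N)) (c (((i : ℝ) + 1) / N)) ≤ c x :=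
    hc.min_le_of_mem_Icc (grid_mem i hiN.le) hb
      ⟨by rw [div_le_iff₀ hNpos]; linarith, by rw [le_div_iff₀ hNpos]; linarith⟩
  have hstep' := abs_le.mp hstep
  refine abs_le.mpr ⟨?_, ?_⟩
  · rcases min_le_iff.mp hlower with h | h <;> linarith
  · rcases i with _ | j
    · have hv : (1 : ℝ) / N + (1 - N * x) * (1 / N - 2 / N) = x := by
        field_simp
        ring
      have h := hc.sub_le_abs_sub_of_extrapolate (u := 2 / N) (q := 1 / N) (s := 1 - N * x)
        (by simpa using grid_mem 2 hN) (by rwa [hv]) (by simp at hxi; linarith)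
        (by simp at hix ⊢; linarith)
      have h2 := hη 1 (by omega)
      rw [hv] at h
      norm_num at h h2 hstep' ⊢
      linarith
    · have hv : ((j + 1 : ℕ) : ℝ) / N +
          (N * x - (j + 1 : ℕ)) * (((j + 1 : ℕ) : ℝ) / N - (j : ℝ) / N) = x := by
        push_cast
        field_simp
        ring
      have h := hc.sub_le_abs_sub_of_extrapolate (u := (j : ℝ) / N) (q := ((j + 1 : ℕ) : ℝ) / N)
        (s := N * x - (j + 1 : ℕ)) (grid_mem j (by omega)) (by rwa [hv]) (by linarith)
        (by linarith)
      have h2 := hη j (by omega)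
      rw [hv, abs_sub_comm] at h
      push_cast at h ⊢
      linarith
end
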